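/- Let B₁ and B₂ be two m×n matrices, each with operator norm 1, both having the same top right singular vector v₀ with singular value 1 (i.e., ‖B_i v₀‖ = ‖v₀‖ = 1), and suppose ‖B_i w‖ ≤ ‖w‖ for all w. Let L be any unit vector in ℝ^n ⊗ ℝ^n orthogonal to v₀ ⊗ v₀. Write L = ∑_{(i,j)≠(0,0)} α_{ij} φ_i ⊗ φ_j, where {φ_i} is the right singular basis of B₁ with φ₀ = v₀. Then there exists a unit vector L' in the span of {φ_i ⊗ φ₀ : i ≥ 1} ∪ {φ₀ ⊗ φ_j : j ≥ 1} such that ‖(B_k ⊗ B_k) L'‖ ≥ ‖(B_k ⊗ B_k) L‖ for both k = 1 and k = 2. -/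

import Mathlib

/-!
Write `L` as an `n × n` matrix and split off its component along `v = φ 0` in the first factor:
`L = v ⊗ a + R`, where `a` and all columns `r_y` of `R` are orthogonal to `v`. Since `B` is a
contraction attaining its norm at `v`, it keeps `v` orthogonal to `v^⊥` (`image_orthogonal`), so
`‖(B ⊗ B) L‖² = ‖B a‖² + ‖(B ⊗ B) R‖² ≤ ‖B a‖² + ∑_y ‖B r_y‖²`, while
`‖a‖² + ∑_y ‖r_y‖² = ‖L‖² = 1`.

Let `T_k = ‖(B_k ⊗ B_k) L‖²` and `P_k(x) = ‖B_k x‖² - T_k ‖x‖²`. The points `(P_1(x), P_2(x)) ∈ ℝ²`,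
for `x` among `a` and the `r_y`, have their sum in the closed positive quadrant. A planar
Carathéodory-type argument (`exists_pair_nonneg`) yields two of these points with a nontrivial
nonnegative combination in that quadrant. As `P_k` is quadratic, suitable multiples `y₁, y₂` of
the corresponding vectors satisfy `‖y₁‖² + ‖y₂‖² = 1` and `‖B_k y₁‖² + ‖B_k y₂‖² ≥ T_k`, and
`L' = v ⊗ y₂ + y₁ ⊗ v` is the required unit vector.
-/

/-- If finitely many points of the plane have their sum in the closed positive quadrant, then
some nontrivial conic combination of at most two of them lies there too. -/
lemma exists_pair_nonneg {ι : Type*} (s : Finset ι) (hs : s.Nonempty) (a b : ι → ℝ)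
    (ha : 0 ≤ ∑ i ∈ s, a i) (hb : 0 ≤ ∑ i ∈ s, b i) :
    ∃ i ∈ s, ∃ j ∈ s, ∃ c d : ℝ, 0 < c ∧ 0 ≤ d ∧
      0 ≤ c * a i + d * a j ∧ 0 ≤ c * b i + d * b j := by
  by_contra! H
  have h1 : ∀ i ∈ s, 0 ≤ a i → b i < 0 := fun i hi h => by
    simpa using H i hi i hi 1 0 one_pos le_rfl (by simpa using h)
  -- For `a i ≥ 0 > a j`, the combination with coefficients `-a j` and `a i` cancels the first
  -- coordinate, so its second coordinate must be negative.
  have h2 : ∀ i ∈ s, ∀ j ∈ s, 0 ≤ a i → a j < 0 → a i * b j - a j * b i < 0 := by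
    intro i hi j hj hai haj
    have := H i hi j hj (-a j) (a i) (by linarith) hai (by nlinarith)
    linarith
  set X := s.filter (fun i => 0 ≤ a i) with hX
  set Y := s.filter (fun i => ¬ 0 ≤ a i) with hY
  have hsa : ∑ i ∈ X, a i + ∑ i ∈ Y, a i = ∑ i ∈ s, a i := Finset.sum_filter_add_sum_filter_not ..
  have hsb : ∑ i ∈ X, b i + ∑ i ∈ Y, b i = ∑ i ∈ s, b i := Finset.sum_filter_add_sum_filter_not ..
  have hXn : X.Nonempty := by
    by_contra hne
    have hall : ∀ i ∈ s, a i < 0 := by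
      intro i hi
      by_contra! h
      exact hne ⟨i, by simp [hX, hi, h]⟩
    exact absurd (Finset.sum_neg hall hs) (by simpa using ha)
  have hXb : ∑ i ∈ X, b i < 0 := Finset.sum_neg (fun i hi => by
    rw [hX, Finset.mem_filter] at hi; exact h1 i hi.1 hi.2) hXn
  have hYn : Y.Nonempty := by
    by_contra hne
    rw [Finset.not_nonempty_iff_eq_empty] at hne
    rw [hne] at hsb
    simp at hsb
    linarith
  have hYa : ∑ i ∈ Y, a i < 0 := Finset.sum_neg (fun i hi => by
    rw [hY, Finset.mem_filter] at hi; exact not_le.1 hi.2) hYn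
  have hdouble : ∑ i ∈ X, ∑ j ∈ Y, (a i * b j - a j * b i) < 0 := by
    refine Finset.sum_neg (fun i hi => Finset.sum_neg (fun j hj => ?_) hYn) hXn
    rw [hX, Finset.mem_filter] at hi
    rw [hY, Finset.mem_filter] at hj
    exact h2 i hi.1 j hj.1 hi.2 (not_le.1 hj.2)
  have heq : ∑ i ∈ X, ∑ j ∈ Y, (a i * b j - a j * b i)
      = (∑ i ∈ X, a i) * (∑ j ∈ Y, b j) - (∑ j ∈ Y, a j) * (∑ i ∈ X, b i) := by
    simp only [Finset.sum_sub_distrib, Finset.sum_mul_sum]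
    congr 1
    exact Finset.sum_comm
  nlinarith

/-- A contraction attaining its norm at a unit vector `v` maps `v^⊥` into `(B v)^⊥`. -/
lemma image_orthogonal {m n : ℕ} (B : Matrix (Fin m) (Fin n) ℝ) (v : Fin n → ℝ)
    (hv : ∑ x, v x ^ 2 = 1) (hBv : ∑ y, (B.mulVec v y) ^ 2 = 1)
    (hB : ∀ w : Fin n → ℝ, ∑ y, (B.mulVec w y) ^ 2 ≤ ∑ x, (w x) ^ 2)
    (w : Fin n → ℝ) (hw : ∑ x, v x * w x = 0) :
    ∑ y, B.mulVec v y * B.mulVec w y = 0 := by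
  have key : ∀ t : ℝ, 2 * t * (∑ y, B.mulVec v y * B.mulVec w y) ≤ t ^ 2 * ∑ x, w x ^ 2 := by
    intro t
    have h := hB (v + t • w)
    have e1 : ∑ y, (B.mulVec (v + t • w) y) ^ 2 = ∑ y, (B.mulVec v y) ^ 2
        + 2 * t * (∑ y, B.mulVec v y * B.mulVec w y) + t ^ 2 * ∑ y, (B.mulVec w y) ^ 2 := by
      simp only [Matrix.mulVec_add, Matrix.mulVec_smul, Finset.mul_sum, ← Finset.sum_add_distrib]
      exact Finset.sum_congr rfl fun y _ => by simp; ring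
    have e2 : ∑ x, ((v + t • w) x) ^ 2 = ∑ x, (v x) ^ 2
        + 2 * t * (∑ x, v x * w x) + t ^ 2 * ∑ x, (w x) ^ 2 := by
      simp only [Finset.mul_sum, ← Finset.sum_add_distrib]
      exact Finset.sum_congr rfl fun y _ => by simp; ring
    rw [e1, e2, hv, hBv, hw] at h
    have : 0 ≤ t ^ 2 * ∑ y, (B.mulVec w y) ^ 2 := by positivity
    linarith
  set c := ∑ y, B.mulVec v y * B.mulVec w y
  set e := ∑ x, w x ^ 2
  have he : 0 ≤ e := by positivity
  -- `t = c / (e + 1)` makes the linear term dominate the quadratic one.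
  have h := key (c / (e + 1))
  have h' : 2 * c ^ 2 * (e + 1) ≤ c ^ 2 * e := by
    have h3 := mul_le_mul_of_nonneg_right h (sq_nonneg (e + 1))
    have e1 : 2 * (c / (e + 1)) * c * (e + 1) ^ 2 = 2 * c ^ 2 * (e + 1) := by
      field_simp
    have e2 : (c / (e + 1)) ^ 2 * e * (e + 1) ^ 2 = c ^ 2 * e := by
      field_simp
    rwa [e1, e2] at h3
  have : c ^ 2 = 0 := by nlinarith [sq_nonneg c, mul_nonneg (sq_nonneg c) he]
  exact pow_eq_zero_iff (two_ne_zero) |>.1 this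

/-- Pythagoras for `u ⊗ a + G` when every column of `G` is orthogonal to `u`. -/
lemma sum_sq_split {k l : ℕ} (u : Fin k → ℝ) (a : Fin l → ℝ) (G : Fin k × Fin l → ℝ)
    (hG : ∀ y, ∑ x, u x * G (x, y) = 0) :
    ∑ q : Fin k × Fin l, (u q.1 * a q.2 + G q) ^ 2
      = (∑ x, u x ^ 2) * (∑ y, a y ^ 2) + ∑ q, G q ^ 2 := by
  have hc : ∑ q : Fin k × Fin l, a q.2 * (u q.1 * G q) = 0 := by
    rw [Fintype.sum_prod_type_right]
    simp [← Finset.mul_sum, hG]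
  have hp : (∑ x, u x ^ 2) * (∑ y, a y ^ 2) = ∑ q : Fin k × Fin l, u q.1 ^ 2 * a q.2 ^ 2 := by
    rw [Fintype.sum_prod_type, Finset.sum_mul_sum]
  have : ∀ q : Fin k × Fin l, (u q.1 * a q.2 + G q) ^ 2
      = u q.1 ^ 2 * a q.2 ^ 2 + 2 * (a q.2 * (u q.1 * G q)) + G q ^ 2 := fun q => by ring
  rw [hp, Finset.sum_congr rfl fun q _ => this q, Finset.sum_add_distrib, Finset.sum_add_distrib,
    ← Finset.mul_sum, hc]
  ring

lemma kron_mulVec_left {m n : ℕ} (B : Matrix (Fin m) (Fin n) ℝ)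
    (R : Fin n × Fin n → ℝ) (p : Fin m × Fin m) :
    Matrix.mulVec (fun (p : Fin m × Fin m) (q : Fin n × Fin n) => B p.1 q.1 * B p.2 q.2) R p
      = B.mulVec (fun x => B.mulVec (fun y => R (x, y)) p.2) p.1 := by
  simp only [Matrix.mulVec, dotProduct, Fintype.sum_prod_type, Finset.mul_sum]
  exact Finset.sum_congr rfl fun x _ => Finset.sum_congr rfl fun y _ => by ring

lemma kron_mulVec_right {m n : ℕ} (B : Matrix (Fin m) (Fin n) ℝ)
    (R : Fin n × Fin n → ℝ) (p : Fin m × Fin m) :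
    Matrix.mulVec (fun (p : Fin m × Fin m) (q : Fin n × Fin n) => B p.1 q.1 * B p.2 q.2) R p
      = B.mulVec (fun y => B.mulVec (fun x => R (x, y)) p.1) p.2 := by
  simp only [Matrix.mulVec, dotProduct, Fintype.sum_prod_type_right, Finset.mul_sum]
  exact Finset.sum_congr rfl fun x _ => Finset.sum_congr rfl fun y _ => by ring

lemma kron_mulVec_prod {m n : ℕ} (B : Matrix (Fin m) (Fin n) ℝ)
    (u v : Fin n → ℝ) (p : Fin m × Fin m) :
    Matrix.mulVec (fun (p : Fin m × Fin m) (q : Fin n × Fin n) => B p.1 q.1 * B p.2 q.2)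
      (fun q => u q.1 * v q.2) p = B.mulVec u p.1 * B.mulVec v p.2 := by
  simp only [Matrix.mulVec, dotProduct, Fintype.sum_prod_type, Finset.sum_mul_sum]
  exact Finset.sum_congr rfl fun x _ => Finset.sum_congr rfl fun y _ => by ring

/-- The images of `v ⊗ a` and `R` under `B ⊗ B` are orthogonal, and `‖(B ⊗ B) R‖ ≤ ‖(B ⊗ 1) R‖`
because `B` is a contraction; the last sum below is `‖(B ⊗ 1) R‖²`. -/
lemma kron_upper {m n : ℕ} (B : Matrix (Fin m) (Fin n) ℝ) (v : Fin n → ℝ)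
    (hv : ∑ x, v x ^ 2 = 1) (hBv : ∑ y, (B.mulVec v y) ^ 2 = 1)
    (hB : ∀ w : Fin n → ℝ, ∑ y, (B.mulVec w y) ^ 2 ≤ ∑ x, (w x) ^ 2)
    (a : Fin n → ℝ) (R : Fin n × Fin n → ℝ) (hR : ∀ y, ∑ x, v x * R (x, y) = 0) :
    ∑ p, (Matrix.mulVec (fun (p : Fin m × Fin m) (q : Fin n × Fin n) => B p.1 q.1 * B p.2 q.2)
        (fun q => v q.1 * a q.2 + R q) p) ^ 2
      ≤ ∑ p, (B.mulVec a p) ^ 2 + ∑ y, ∑ p, (B.mulVec (fun x => R (x, y)) p) ^ 2 := by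
  set K : Matrix (Fin m × Fin m) (Fin n × Fin n) ℝ := fun p q => B p.1 q.1 * B p.2 q.2 with hK
  have h1 : ∀ p, K.mulVec (fun q => v q.1 * a q.2 + R q) p
      = B.mulVec v p.1 * B.mulVec a p.2 + K.mulVec R p := by
    intro p
    rw [← kron_mulVec_prod, ← hK, ← Pi.add_apply, ← Matrix.mulVec_add]
    rfl
  rw [Finset.sum_congr rfl fun p _ => by rw [h1 p], sum_sq_split, hBv, one_mul]
  · gcongr
    rw [Finset.sum_comm, Fintype.sum_prod_type]
    refine Finset.sum_le_sum fun p _ => ?_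
    refine le_trans (le_of_eq ?_) (hB (fun y => B.mulVec (fun x => R (x, y)) p))
    exact Finset.sum_congr rfl fun z _ => by rw [hK, kron_mulVec_right]
  · intro z
    have h2 : ∀ x, K.mulVec R (x, z) = B.mulVec (fun x => B.mulVec (fun y => R (x, y)) z) x :=
      fun x => by rw [hK, kron_mulVec_left]
    simp only [h2]
    apply image_orthogonal B v hv hBv hB
    simp only [Matrix.mulVec, dotProduct, Finset.mul_sum]
    rw [Finset.sum_comm]
    refine Finset.sum_eq_zero fun y _ => ?_
    have := congrArg (B z y * ·) (hR y)
    simp only [Finset.mul_sum, mul_zero] at this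
    rw [← this]
    exact Finset.sum_congr rfl fun x _ => by ring

/-- On `v ⊗ a + b ⊗ v` with `b ⊥ v`, the bound of `kron_upper` is attained. -/
lemma kron_exact {m n : ℕ} (B : Matrix (Fin m) (Fin n) ℝ) (v : Fin n → ℝ)
    (hv : ∑ x, v x ^ 2 = 1) (hBv : ∑ y, (B.mulVec v y) ^ 2 = 1)
    (hB : ∀ w : Fin n → ℝ, ∑ y, (B.mulVec w y) ^ 2 ≤ ∑ x, (w x) ^ 2)
    (a b : Fin n → ℝ) (hb : ∑ x, v x * b x = 0) :
    ∑ p, (Matrix.mulVec (fun (p : Fin m × Fin m) (q : Fin n × Fin n) => B p.1 q.1 * B p.2 q.2)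
        (fun q => v q.1 * a q.2 + b q.1 * v q.2) p) ^ 2
      = ∑ p, (B.mulVec a p) ^ 2 + ∑ p, (B.mulVec b p) ^ 2 := by
  set K : Matrix (Fin m × Fin m) (Fin n × Fin n) ℝ := fun p q => B p.1 q.1 * B p.2 q.2 with hK
  have h1 : ∀ p, K.mulVec (fun q => v q.1 * a q.2 + b q.1 * v q.2) p
      = B.mulVec v p.1 * B.mulVec a p.2 + B.mulVec b p.1 * B.mulVec v p.2 := by
    intro p
    rw [← kron_mulVec_prod, ← kron_mulVec_prod, ← hK, ← Pi.add_apply, ← Matrix.mulVec_add]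
    rfl
  rw [Finset.sum_congr rfl fun p _ => by rw [h1 p],
    sum_sq_split _ _ (fun p => B.mulVec b p.1 * B.mulVec v p.2), hBv, one_mul]
  · congr 1
    rw [Fintype.sum_prod_type]
    simp only [mul_pow]
    rw [← Finset.sum_mul_sum, hBv, mul_one]
  · intro z
    simp only [← mul_assoc, ← Finset.sum_mul]
    rw [image_orthogonal B v hv hBv hB b hb, zero_mul]

/-- Completeness: `n` orthonormal vectors in `ℝⁿ` expand every vector. -/
lemma expand {n : ℕ} (φ : Fin n → (Fin n → ℝ))
    (hortho : ∀ i j, (∑ x, φ i x * φ j x) = if i = j then 1 else 0) (w : Fin n → ℝ) :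
    w = ∑ i, (∑ x, φ i x * w x) • φ i := by
  have h : Matrix.of φ * (Matrix.of φ).transpose = 1 := by
    ext i j
    simp [Matrix.mul_apply, hortho, Matrix.one_apply]
  have h' := mul_eq_one_comm.1 h
  have h2 : ((Matrix.of φ).transpose * Matrix.of φ).mulVec w = w := by rw [h', Matrix.one_mulVec]
  rw [← Matrix.mulVec_mulVec] at h2
  conv_lhs => rw [← h2]
  ext x
  simp only [Matrix.mulVec, dotProduct, Matrix.transpose_apply, Matrix.of_apply,
    Finset.sum_apply, Pi.smul_apply, smul_eq_mul]
  exact Finset.sum_congr rfl fun i _ => by ring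

/-- Two vectors suffice: a finite family in a subspace `W` (of any size) with total squared norm
`1` can be replaced by two vectors of `W` with total squared norm `1`, without pushing the total
squared norms of the images under `B1` and `B2` below given lower bounds `T1` and `T2`. -/
lemma exists_two {m n : ℕ} {ι : Type*} [Fintype ι] (B1 B2 : Matrix (Fin m) (Fin n) ℝ)
    (W : Submodule ℝ (Fin n → ℝ)) (X : ι → Fin n → ℝ) (hXW : ∀ i, X i ∈ W)
    (hX : ∑ i, ∑ x, X i x ^ 2 = 1) (T1 T2 : ℝ)
    (h1 : T1 ≤ ∑ i, ∑ p, (B1.mulVec (X i) p) ^ 2)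
    (h2 : T2 ≤ ∑ i, ∑ p, (B2.mulVec (X i) p) ^ 2) :
    ∃ y ∈ W, ∃ z ∈ W, ∑ x, y x ^ 2 + ∑ x, z x ^ 2 = 1 ∧
      T1 ≤ ∑ p, (B1.mulVec y p) ^ 2 + ∑ p, (B1.mulVec z p) ^ 2 ∧
      T2 ≤ ∑ p, (B2.mulVec y p) ^ 2 + ∑ p, (B2.mulVec z p) ^ 2 := by
  classical
  set N : ι → ℝ := fun i => ∑ x, X i x ^ 2 with hN
  have hN0 : ∀ i, 0 ≤ N i := fun i => by positivity
  -- Only nonzero vectors are kept, so that the pair found below has positive total norm.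
  set s : Finset ι := Finset.univ.filter (fun i => N i ≠ 0) with hs
  have hrest : ∀ (B : Matrix (Fin m) (Fin n) ℝ) (T : ℝ),
      ∑ i ∈ s, (∑ p, (B.mulVec (X i) p) ^ 2 - T * N i)
        = ∑ i, ∑ p, (B.mulVec (X i) p) ^ 2 - T := by
    intro B T
    have : ∑ i ∈ s, (∑ p, (B.mulVec (X i) p) ^ 2 - T * N i)
        = ∑ i, (∑ p, (B.mulVec (X i) p) ^ 2 - T * N i) := by
      refine Finset.sum_subset (Finset.subset_univ _) fun i _ hi => ?_
      have hi0 : N i = 0 := by simpa [hs] using hi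
      have hz : X i = 0 := by
        ext x
        have := (Finset.sum_eq_zero_iff_of_nonneg (fun x _ => sq_nonneg (X i x))).1 hi0 x
          (Finset.mem_univ _)
        simpa using this
      simp [hi0, hz]
    rw [this, Finset.sum_sub_distrib, ← Finset.mul_sum, hX, mul_one]
  have hsn : s.Nonempty := by
    by_contra hne
    rw [Finset.not_nonempty_iff_eq_empty] at hne
    have : ∀ i, N i = 0 := fun i => by
      by_contra h
      have : i ∈ s := by simp [hs, h]
      simp [hne] at this
    rw [Finset.sum_congr rfl fun i _ => this i] at hX
    simp at hX
  obtain ⟨i, hi, j, -, c, d, hc, hd, ha, hb⟩ := exists_pair_nonneg s hsn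
    (fun i => ∑ p, (B1.mulVec (X i) p) ^ 2 - T1 * N i)
    (fun i => ∑ p, (B2.mulVec (X i) p) ^ 2 - T2 * N i)
    (by rw [hrest]; linarith) (by rw [hrest]; linarith)
  have hNi : 0 < N i := lt_of_le_of_ne (hN0 i) (Ne.symm (by simpa [hs] using hi))
  set D := c * N i + d * N j with hD
  have hDpos : 0 < D := by
    have := mul_pos hc hNi
    have := mul_nonneg hd (hN0 j)
    linarith
  have hcD : 0 ≤ c / D := by positivity
  have hdD : 0 ≤ d / D := by positivity
  have sc : ∀ (B : Matrix (Fin m) (Fin n) ℝ) (t : ℝ), 0 ≤ t → ∀ k,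
      ∑ p, (B.mulVec (√t • X k) p) ^ 2 = t * ∑ p, (B.mulVec (X k) p) ^ 2 := by
    intro B t ht k
    simp only [Matrix.mulVec_smul, Pi.smul_apply, smul_eq_mul, mul_pow, Real.sq_sqrt ht,
      Finset.mul_sum]
  have sn : ∀ t : ℝ, 0 ≤ t → ∀ k, ∑ x, ((√t • X k) x) ^ 2 = t * N k := by
    intro t ht k
    simp only [hN, Pi.smul_apply, smul_eq_mul, mul_pow, Real.sq_sqrt ht, Finset.mul_sum]
  have fin : ∀ T u v : ℝ, 0 ≤ c * (u - T * N i) + d * (v - T * N j) →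
      T ≤ c / D * u + d / D * v := by
    intro T u v h
    have e : c / D * u + d / D * v = (c * u + d * v) / D := by ring
    rw [e, le_div_iff₀ hDpos, hD]
    linarith
  refine ⟨√(c / D) • X i, W.smul_mem _ (hXW i), √(d / D) • X j, W.smul_mem _ (hXW j), ?_, ?_, ?_⟩
  · rw [sn _ hcD, sn _ hdD]
    have e : c / D * N i + d / D * N j = D / D := by rw [hD]; ring
    rw [e, div_self hDpos.ne']
  · rw [sc _ _ hcD, sc _ _ hdD]
    exact fin _ _ _ ha
  · rw [sc _ _ hcD, sc _ _ hdD]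
    exact fin _ _ _ hb

/-- Key step for 2-receiver broadcast channels: for contractions `B₁, B₂` with common
top right singular vector `φ₀ = v₀` (singular value 1), any unit vector `L ⊥ v₀ ⊗ v₀`
can be replaced by a unit vector `L'` supported on `{φᵢ ⊗ φ₀, φ₀ ⊗ φⱼ : i, j ≥ 1}`
whose images under both `B₁ ⊗ B₁` and `B₂ ⊗ B₂` have norms at least as large. -/
theorem stmt_11 {m n : ℕ} [NeZero n]
    (B1 B2 : Matrix (Fin m) (Fin n) ℝ)
    (φ : Fin n → (Fin n → ℝ)) (μ : Fin n → ℝ)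
    -- φ is an orthonormal basis of right singular vectors of B₁:
    (hortho : ∀ i j, (∑ x, φ i x * φ j x) = if i = j then 1 else 0)
    (hsing : ∀ i, (B1.transpose * B1).mulVec (φ i) = (μ i ^ 2) • φ i)
    -- φ 0 = v₀ is a top singular vector, with singular value 1, of both matrices:
    (hB1v0 : ∑ y, (B1.mulVec (φ 0) y) ^ 2 = 1)
    (hB2v0 : ∑ y, (B2.mulVec (φ 0) y) ^ 2 = 1)
    -- both maps are contractions:
    (hB1c : ∀ w : Fin n → ℝ, ∑ y, (B1.mulVec w y) ^ 2 ≤ ∑ x, (w x) ^ 2)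
    (hB2c : ∀ w : Fin n → ℝ, ∑ y, (B2.mulVec w y) ^ 2 ≤ ∑ x, (w x) ^ 2)
    (B1t B2t : Matrix (Fin m × Fin m) (Fin n × Fin n) ℝ)
    (hB1t : B1t = fun p q => B1 p.1 q.1 * B1 p.2 q.2)
    (hB2t : B2t = fun p q => B2 p.1 q.1 * B2 p.2 q.2)
    (L : Fin n × Fin n → ℝ)
    (hLunit : ∑ q, (L q) ^ 2 = 1)
    (hLperp : (∑ q : Fin n × Fin n, L q * (φ 0 q.1 * φ 0 q.2)) = 0) :
    ∃ L' : Fin n × Fin n → ℝ, (∑ q, (L' q) ^ 2 = 1) ∧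
      L' ∈ Submodule.span ℝ
        ({w : Fin n × Fin n → ℝ | ∃ i : Fin n, i ≠ 0 ∧
            (w = (fun q => φ i q.1 * φ 0 q.2) ∨ w = fun q => φ 0 q.1 * φ i q.2)}) ∧
      (∑ p, (B1t.mulVec L' p) ^ 2 ≥ ∑ p, (B1t.mulVec L p) ^ 2) ∧
      (∑ p, (B2t.mulVec L' p) ^ 2 ≥ ∑ p, (B2t.mulVec L p) ^ 2) := by
  subst hB1t hB2t
  set v := φ 0 with hvdef
  have hv : ∑ x, v x ^ 2 = 1 := by simpa [sq] using hortho 0 0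
  set a : Fin n → ℝ := fun y => ∑ x, v x * L (x, y) with ha
  set R : Fin n × Fin n → ℝ := fun q => L q - v q.1 * a q.2 with hRdef
  have hR : ∀ y, ∑ x, v x * R (x, y) = 0 := by
    intro y
    have : ∀ x, v x * R (x, y) = v x * L (x, y) - v x ^ 2 * a y := fun x => by
      simp only [hRdef]; ring
    rw [Finset.sum_congr rfl fun x _ => this x, Finset.sum_sub_distrib, ← Finset.sum_mul, hv]
    simp [ha]
  have hL : L = fun q => v q.1 * a q.2 + R q := by
    ext q; simp [hRdef]
  have hav : ∑ y, v y * a y = 0 := by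
    rw [← hLperp, Fintype.sum_prod_type_right]
    simp only [ha, Finset.mul_sum]
    exact Finset.sum_congr rfl fun y _ => Finset.sum_congr rfl fun x _ => by ring
  let W : Submodule ℝ (Fin n → ℝ) :=
    { carrier := {w | ∑ x, v x * w x = 0}
      zero_mem' := by simp
      add_mem' := by
        intro p q hp hq
        simp only [Set.mem_ofPred_eq] at hp hq ⊢
        simp [mul_add, Finset.sum_add_distrib, hp, hq]
      smul_mem' := by
        intro c p hp
        simp only [Set.mem_ofPred_eq] at hp ⊢
        simp [mul_left_comm _ c, ← Finset.mul_sum, hp] }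
  let X : Option (Fin n) → Fin n → ℝ := fun o => o.elim a (fun y x => R (x, y))
  have hXW : ∀ o, X o ∈ W := by
    rintro (_ | y)
    · exact hav
    · exact hR y
  have hX : ∑ o, ∑ x, X o x ^ 2 = 1 := by
    rw [← hLunit, hL, sum_sq_split _ _ _ hR, hv, one_mul, Fintype.sum_option,
      Fintype.sum_prod_type_right]
    rfl
  have u1 := kron_upper B1 v hv hB1v0 hB1c a R hR
  have u2 := kron_upper B2 v hv hB2v0 hB2c a R hR
  rw [← hL] at u1 u2
  obtain ⟨y, hy, z, hz, hn, h1, h2⟩ := exists_two B1 B2 W X hXW hX _ _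
    (u1.trans_eq (Fintype.sum_option fun o => ∑ p, (B1.mulVec (X o) p) ^ 2).symm)
    (u2.trans_eq (Fintype.sum_option fun o => ∑ p, (B2.mulVec (X o) p) ^ 2).symm)
  refine ⟨fun q => v q.1 * y q.2 + z q.1 * v q.2, ?_, ?_, ?_, ?_⟩
  · rw [sum_sq_split _ _ (fun q => z q.1 * v q.2), hv, one_mul, Fintype.sum_prod_type]
    · simp only [mul_pow]
      rw [← Finset.sum_mul_sum, hv, mul_one]
      exact hn
    · intro x
      simp only [← mul_assoc, ← Finset.sum_mul]
      rw [show ∑ x, v x * z x = 0 from hz, zero_mul]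
  · have hexp : (fun q : Fin n × Fin n => v q.1 * y q.2 + z q.1 * v q.2)
        = ∑ i, ((∑ x, φ i x * y x) • (fun q : Fin n × Fin n => φ 0 q.1 * φ i q.2)
          + (∑ x, φ i x * z x) • (fun q : Fin n × Fin n => φ i q.1 * φ 0 q.2)) := by
      ext q
      have ey := congrFun (expand φ hortho y) q.2
      have ez := congrFun (expand φ hortho z) q.1
      simp only [Finset.sum_apply, Pi.smul_apply, smul_eq_mul] at ey ez
      simp only [Finset.sum_apply, Pi.add_apply, Pi.smul_apply, smul_eq_mul,
        Finset.sum_add_distrib]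
      rw [ey, ez, Finset.mul_sum, Finset.sum_mul]
      congr 1 <;> exact Finset.sum_congr rfl fun i _ => by ring
    rw [hexp]
    refine Submodule.sum_mem _ fun i _ => ?_
    by_cases hi : i = 0
    · have e1 : ∑ x, φ i x * y x = 0 := by rw [hi]; exact hy
      have e2 : ∑ x, φ i x * z x = 0 := by rw [hi]; exact hz
      rw [e1, e2]
      simp
    · exact Submodule.add_mem _
        (Submodule.smul_mem _ _ (Submodule.subset_span ⟨i, hi, Or.inr rfl⟩))
        (Submodule.smul_mem _ _ (Submodule.subset_span ⟨i, hi, Or.inl rfl⟩))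
  · rw [kron_exact B1 v hv hB1v0 hB1c y z hz]
    exact h1
  · rw [kron_exact B2 v hv hB2v0 hB2c y z hz]
    exact h2
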